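/- Let x be a rational number that is not an integer. Then the depth d(x) equals the minimum, over all n ≥ 1, of the lengths n of continued fraction expansions x = r + [a_1, …, a_n] with r an integer and a_1, …, a_n integers satisfying |a_i| ≥ 2 for all i; in particular such an expansion exists, and an expansion of length exactly d(x) exists. -/

import Mathlib

/-!
In the Farey graph (reduced fractions `p/q` and `p'/q'` joined when `p q' - q p' = ±1`, with
`∞ = 1/0`), an expansion `x = r + [a₁, …, aₙ]` is the path `∞, r, r + [a₁], …, x` of its
convergents. The condition `|aᵢ| ≥ 2` forces the absolute values of the denominators to increase
strictly along this path.

The only neighbours of a non-integer `x` with smaller denominator are its two Farey parents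
(`IsFareyParents.eq_of_neighbour`), so each convergent is a parent of the next, and the depth grows
by at most one at each step: depth is at most length (`Conv.depth_le`).

Conversely, take the parent `u` of `x` of smaller depth and an expansion of `u` whose length is the
depth of `u`. Being a neighbour of `u = p/q`, `x` is `(A p + p')/(A q + q')` for some integer `A`,
where `p'/q'` is the convergent before `u`. Comparison of denominators excludes `A = 0`. If
`A = ±1`, then `p'/q'` is the other parent of `x`, whose depth is then less than that of `u`,
against the choice of `u`. So `|A| ≥ 2`, and appending `A` gives an expansion of `x`
(`Conv.exists_snoc`).
-/


/-- The continued fraction value `[a₁, …, aₙ] = 1/(a₁ + 1/(a₂ + ⋯ + 1/aₙ))` of a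
list of integers, defined recursively with `[] = 0`, using the total division of `ℚ`. -/
def cfVal : List ℤ → ℚ
  | [] => 0
  | a :: l => 1 / ((a : ℚ) + cfVal l)

/-- `u` and `v` are the two Farey parents of `x`: there are integers `a, b, c, d` with
`1 ≤ b, d`, `b + d = q`, `a + c = p`, `a·d − b·c = ±1`, `u = a/b` and `v = c/d`,
where `x = p/q` in lowest terms. -/
def IsFareyParents (x u v : ℚ) : Prop :=
  ∃ a b c d : ℤ, 1 ≤ b ∧ 1 ≤ d ∧ b + d = (x.den : ℤ) ∧ a + c = x.num ∧
    (a * d - b * c = 1 ∨ a * d - b * c = -1) ∧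
    u = (a : ℚ) / (b : ℚ) ∧ v = (c : ℚ) / (d : ℚ)

/-- The graph of the depth function on `ℚ`: integers have depth `0`, and otherwise
`d(x) = 1 + min(d(u), d(v))` where `u, v` are the two Farey parents of `x`. -/
inductive DepthRel : ℚ → ℕ → Prop
  | int (x : ℚ) (h : x.den = 1) : DepthRel x 0
  | step (x u v : ℚ) (m k : ℕ) (h : x.den ≠ 1) (hp : IsFareyParents x u v)
      (hu : DepthRel u m) (hv : DepthRel v k) : DepthRel x (1 + min m k)

/-- The depth `d(x)` of a rational number. -/
noncomputable def fareyDepth (x : ℚ) : ℕ := sInf {n | DepthRel x n}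

/-! ### Convergents of an admissible expansion -/

/-- The continued fraction `[a₁, …, aₙ + t]` with a rational tail `t`; it equals `t` when
`n = 0`. -/
def cfTail : List ℤ → ℚ → ℚ
  | [], t => t
  | a :: l, t => 1 / ((a : ℚ) + cfTail l t)

lemma cfTail_zero (L : List ℤ) : cfTail L 0 = cfVal L := by
  induction L with
  | nil => rfl
  | cons a l ih => simp [cfTail, cfVal, ih]

lemma cfTail_snoc (L : List ℤ) (a : ℤ) (t : ℚ) :
    cfTail (L ++ [a]) t = cfTail L (1 / ((a : ℚ) + t)) := by
  induction L with
  | nil => rfl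
  | cons b l ih => simp only [List.cons_append, cfTail, ih]

/-- `Conv r L p' q' p q` says that `L` has all entries of absolute value at least `2` and that
`p'/q'`, `p/q` are the last two convergents of `r + [L]`, as produced by the usual recurrence
starting from `1/0`, `r/1`. The denominators may be negative. -/
inductive Conv (r : ℤ) : List ℤ → ℤ → ℤ → ℤ → ℤ → Prop
  | init : Conv r [] 1 0 r 1
  | snoc (L : List ℤ) (p' q' p q a : ℤ) (h : Conv r L p' q' p q) (ha : 2 ≤ |a|) :
      Conv r (L ++ [a]) p q (a * p + p') (a * q + q')

namespace Conv

lemma exists_of_list (r : ℤ) (L : List ℤ) (hL : ∀ a ∈ L, 2 ≤ |a|) :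
    ∃ p' q' p q, Conv r L p' q' p q := by
  induction L using List.reverseRecOn with
  | nil => exact ⟨_, _, _, _, init⟩
  | append_singleton L a ih =>
    obtain ⟨p', q', p, q, h⟩ := ih fun b hb => hL b (by simp [hb])
    exact ⟨_, _, _, _, h.snoc _ _ _ _ _ a (hL a (by simp))⟩

variable {r : ℤ} {L : List ℤ} {p' q' p q : ℤ}

lemma two_le (h : Conv r L p' q' p q) : ∀ a ∈ L, 2 ≤ |a| := by
  induction h with
  | init => simp
  | snoc L p' q' p q a h ha ih =>
    intro b hb
    rcases List.mem_append.1 hb with hb | hb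
    · exact ih b hb
    · rw [List.mem_singleton.1 hb]; exact ha

lemma abs_lt (h : Conv r L p' q' p q) : |q'| < |q| := by
  induction h with
  | init => simp
  | snoc L p' q' p q a h ha ih =>
    have h1 : |a * q| ≤ |a * q + q'| + |q'| := by
      simpa using abs_sub (a * q + q') q'
    rw [abs_mul] at h1
    nlinarith [abs_nonneg q]

lemma ne_zero (h : Conv r L p' q' p q) : q ≠ 0 :=
  abs_pos.1 ((abs_nonneg _).trans_lt h.abs_lt)

lemma det (h : Conv r L p' q' p q) : p * q' - q * p' = 1 ∨ p * q' - q * p' = -1 := by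
  induction h with
  | init => right; ring
  | snoc L p' q' p q a h ha ih =>
    rcases ih with ih | ih
    · right; linear_combination -ih
    · left; linear_combination -ih

lemma isCoprime (h : Conv r L p' q' p q) : IsCoprime p q := by
  rcases h.det with h | h
  · exact ⟨q', -p', by linear_combination h⟩
  · exact ⟨-q', p', by linear_combination -h⟩

/-- The convergent recurrence computes the continued fraction. A tail `t` with `|t| < 1` is carried
along so that the induction can append entries at the end of the list. -/
lemma add_cfTail (h : Conv r L p' q' p q) (t : ℚ) (ht : |t| < 1) :
    (r : ℚ) + cfTail L t = (p + t * p') / (q + t * q') := by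
  induction h generalizing t with
  | init => simp [cfTail]
  | snoc L p' q' p q a h ha ih =>
    have ha' : (2 : ℚ) ≤ |(a : ℚ)| := by exact_mod_cast ha
    have h1 : 1 < |(a : ℚ) + t| := by
      have : |(a : ℚ)| ≤ |(a : ℚ) + t| + |t| := by simpa using abs_sub ((a : ℚ) + t) t
      linarith
    have h0 : (a : ℚ) + t ≠ 0 := abs_pos.1 (by linarith)
    rw [cfTail_snoc, ih _ (by
      rw [abs_div, abs_one]; exact (div_lt_one (by linarith)).2 h1),
      ← mul_div_mul_right _ _ h0]
    push_cast
    congr 1 <;> field_simp <;> ring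

lemma add_cfVal (h : Conv r L p' q' p q) : (r : ℚ) + cfVal L = (p : ℚ) / q := by
  rw [← cfTail_zero, h.add_cfTail 0 (by simp)]
  simp

end Conv

/-! ### Neighbours and parents in the Farey graph -/

/-- A reduced fraction is determined up to a common sign of numerator and denominator. -/
lemma eq_sign_of_div_eq {a b c d : ℤ} (hb : b ≠ 0) (hd : d ≠ 0) (h1 : IsCoprime a b)
    (h2 : IsCoprime c d) (h : (a : ℚ) / b = (c : ℚ) / d) :
    (a = c ∧ b = d) ∨ (a = -c ∧ b = -d) := by
  have hb' : (b : ℚ) ≠ 0 := by exact_mod_cast hb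
  have hd' : (d : ℚ) ≠ 0 := by exact_mod_cast hd
  rw [div_eq_div_iff hb' hd'] at h
  have h : a * d = c * b := by exact_mod_cast h
  have hbd : b ∣ d := h1.symm.dvd_of_dvd_mul_left ⟨c, by linear_combination h⟩
  have hdb : d ∣ b := h2.symm.dvd_of_dvd_mul_left ⟨a, by linear_combination -h⟩
  rcases Int.associated_iff.1 (associated_of_dvd_dvd hbd hdb) with e | e
  · subst e
    exact .inl ⟨mul_right_cancel₀ hb h, rfl⟩
  · subst e
    exact .inr ⟨mul_right_cancel₀ hd (by linear_combination h), rfl⟩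

lemma isCoprime_num_den (x : ℚ) : IsCoprime x.num (x.den : ℤ) :=
  Int.isCoprime_iff_gcd_eq_one.2 x.reduced

lemma IsFareyParents.symm {x u v : ℚ} (h : IsFareyParents x u v) : IsFareyParents x v u := by
  obtain ⟨a, b, c, d, hb, hd, hq, hp, hdet, hu, hv⟩ := h
  refine ⟨c, d, a, b, hd, hb, by omega, by omega, ?_, hv, hu⟩
  rcases hdet with h | h
  · right; linear_combination -h
  · left; linear_combination -h

/-- A fraction is determined by its determinant against `p/q` once its denominator is known to lie
strictly between `0` and `q`. -/
lemma eq_of_det_eq {p q a b e f : ℤ} (hpq : IsCoprime p q) (hb : 0 < b) (hbq : b < q) (hf : 0 < f)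
    (hfq : f < q) (h : e * q - f * p = a * q - b * p) : e = a ∧ f = b := by
  have h1 : q ∣ f - b := hpq.symm.dvd_of_dvd_mul_left ⟨e - a, by linear_combination -h⟩
  have h2 : f - b = 0 := Int.eq_zero_of_abs_lt_dvd h1 (by rw [abs_lt]; omega)
  have h3 : f = b := by omega
  subst h3
  exact ⟨mul_right_cancel₀ (by omega : q ≠ 0) (by linear_combination h), rfl⟩

/-- The only Farey neighbours of `x` with smaller denominator are its two parents. -/
lemma IsFareyParents.eq_of_neighbour {x u v : ℚ} (h : IsFareyParents x u v) {e f : ℤ}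
    (hf : f ≠ 0) (hfq : |f| < x.den)
    (hdet : e * x.den - f * x.num = 1 ∨ e * x.den - f * x.num = -1) :
    (e : ℚ) / f = u ∨ (e : ℚ) / f = v := by
  wlog hpos : 0 < f generalizing e f
  · have := this (e := -e) (f := -f) (by omega) (by rwa [abs_neg])
      (by rcases hdet with h | h
          · right; linear_combination -h
          · left; linear_combination -h) (by omega)
    simpa using this
  rw [abs_of_pos hpos] at hfq
  obtain ⟨a, b, c, d, hb, hd, hq, hp, hab, rfl, rfl⟩ := h
  have hc := isCoprime_num_den x
  have h1 : a * x.den - b * x.num = a * d - b * c := by rw [← hq, ← hp]; ring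
  have h2 : c * x.den - d * x.num = -(a * d - b * c) := by rw [← hq, ← hp]; ring
  have key : e * x.den - f * x.num = a * x.den - b * x.num ∨
      e * x.den - f * x.num = c * x.den - d * x.num := by omega
  rcases key with key | key
  · obtain ⟨rfl, rfl⟩ := eq_of_det_eq hc (by omega) (by omega) hpos hfq key
    exact .inl rfl
  · obtain ⟨rfl, rfl⟩ := eq_of_det_eq hc (by omega) (by omega) hpos hfq key
    exact .inr rfl

/-! ### Comparison of depth and length -/

/-- Depth is at most the length of any admissible expansion. -/
lemma Conv.depth_le {r : ℤ} {L : List ℤ} {p' q' p q : ℤ} (h : Conv r L p' q' p q) {m : ℕ}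
    (hm : DepthRel ((p : ℚ) / q) m) : m ≤ L.length := by
  induction h generalizing m with
  | init =>
    cases hm with
    | int => simp
    | step _ u v m k h => simp at h
  | snoc L p' q' p q a h ha ih =>
    have hs := h.snoc _ _ _ _ _ a ha
    generalize a * p + p' = P at *
    generalize a * q + q' = Q at *
    generalize hx : (P : ℚ) / Q = x at *
    cases hm with
    | int => simp
    | step _ u v m k hden hpar hu hv =>
      have hsign := eq_sign_of_div_eq hs.ne_zero (by exact_mod_cast x.den_ne_zero) hs.isCoprime
        (isCoprime_num_den x) (by rw [hx]; exact_mod_cast (Rat.num_div_den x).symm)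
      have hlt := hs.abs_lt
      have hQ : |Q| = x.den := by
        rcases hsign with ⟨-, e⟩ | ⟨-, e⟩ <;> rw [e] <;> simp
      have hdet : p * x.den - q * x.num = 1 ∨ p * x.den - q * x.num = -1 := by
        have := hs.det
        rcases hsign with ⟨e1, e2⟩ | ⟨e1, e2⟩ <;> rw [e1, e2] at this <;>
          rcases this with h | h
        · right; linear_combination -h
        · left; linear_combination -h
        · left; linear_combination h
        · right; linear_combination h
      have hlen : (L ++ [a]).length = L.length + 1 := by simp
      rcases hpar.eq_of_neighbour h.ne_zero (hQ ▸ hlt) hdet with e | e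
      · have := ih (e ▸ hu)
        omega
      · have := ih (e ▸ hv)
        omega

/-- An expansion of one parent that is no longer than the depth of the other parent extends by one
entry to an expansion of `x`. -/
lemma Conv.exists_snoc {x u v : ℚ} (hpar : IsFareyParents x u v) {r : ℤ} {L : List ℤ}
    {p' q' p q : ℤ} (h : Conv r L p' q' p q) (hu : u = (p : ℚ) / q) {k : ℕ} (hv : DepthRel v k)
    (hk : L.length ≤ k) :
    ∃ A p₂ q₂, Conv r (L ++ [A]) p q p₂ q₂ ∧ x = (p₂ : ℚ) / q₂ := by
  obtain ⟨a, b, c, d, hb, hd, hq, hp, hab, rfl, rfl⟩ := hpar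
  have hcop : IsCoprime a b := by
    rcases hab with h | h
    · exact ⟨d, -c, by linear_combination h⟩
    · exact ⟨-d, c, by linear_combination -h⟩
  have hpq := eq_sign_of_div_eq h.ne_zero (by omega) h.isCoprime hcop hu.symm
  have hlt := h.abs_lt
  -- The vectors `(p, q)`, `(p', q')` form a basis of `ℤ²`, and the coefficient of `(p', q')` in
  -- `(a + c, b + d)` is a unit.
  obtain ⟨A, s, hs, hA1, hA2⟩ : ∃ A s : ℤ, (s = 1 ∨ s = -1) ∧ A * p + p' = s * (a + c) ∧
      A * q + q' = s * (b + d) := by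
    have hdet := h.det
    generalize hS : p * q' - q * p' = S at hdet
    generalize hT : a * d - b * c = T at hab
    obtain ⟨ε, hε, rfl, rfl⟩ : ∃ ε : ℤ, (ε = 1 ∨ ε = -1) ∧ p = ε * a ∧ q = ε * b := by
      rcases hpq with ⟨h1, h2⟩ | ⟨h1, h2⟩
      · exact ⟨1, .inl rfl, by simpa using h1, by simpa using h2⟩
      · exact ⟨-1, .inr rfl, by simpa using h1, by simpa using h2⟩
    refine ⟨ε * T * ((a + c) * q' - (b + d) * p'), S * ε * T, ?_, ?_, ?_⟩
    · rcases hdet with rfl | rfl <;> rcases hab with rfl | rfl <;> rcases hε with rfl | rfl <;>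
        simp
    · have hε2 : ε * ε = 1 := by rcases hε with rfl | rfl <;> rfl
      have hT2 : T * T = 1 := by rcases hab with rfl | rfl <;> rfl
      linear_combination (ε * T * (a + c)) * hS - p' * hT2 - p' * T * hT +
        (T * p' * (b * c - a * d)) * hε2
    · have hε2 : ε * ε = 1 := by rcases hε with rfl | rfl <;> rfl
      have hT2 : T * T = 1 := by rcases hab with rfl | rfl <;> rfl
      linear_combination (ε * T * (b + d)) * hS - q' * hT2 - q' * T * hT +
        (T * q' * (b * c - a * d)) * hε2
  have hbq : |q| = b := by
    rcases hpq with ⟨-, e⟩ | ⟨-, e⟩ <;> rw [e] <;> simp <;> omega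
  rw [hbq, _root_.abs_lt] at hlt
  have hA : 2 ≤ |A| := by
    by_contra hA
    have hcases : A = 0 ∨ A = 1 ∨ A = -1 := by
      have := _root_.abs_lt.1 (not_le.1 hA)
      omega
    have hprev : (p' = c ∧ q' = d) ∨ (p' = -c ∧ q' = -d) := by
      rcases hcases with rfl | rfl | rfl <;> rcases hs with rfl | rfl <;>
        rcases hpq with ⟨rfl, rfl⟩ | ⟨rfl, rfl⟩ <;> omega
    have hval : (p' : ℚ) / q' = (c : ℚ) / d := by
      rcases hprev with ⟨rfl, rfl⟩ | ⟨rfl, rfl⟩ <;> simp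
    cases h with
    | init => omega
    | snoc L₀ p'' q'' _ _ a₀ h₀ ha₀ =>
      have := h₀.depth_le (hval ▸ hv)
      simp at hk
      omega
  refine ⟨A, _, _, h.snoc _ _ _ _ _ A hA, ?_⟩
  rw [hA1, hA2, hq, hp]
  rcases hs with rfl | rfl <;> simp [Rat.num_div_den]

lemma DepthRel.exists_conv {x : ℚ} {m : ℕ} (h : DepthRel x m) :
    ∃ r L p' q' p q, L.length = m ∧ Conv r L p' q' p q ∧ x = (p : ℚ) / q := by
  induction h with
  | int x h =>
    refine ⟨x.num, [], _, _, _, _, rfl, .init, ?_⟩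
    simpa using (Rat.den_eq_one_iff x).1 h |>.symm
  | step x u v m k h hp hu hv ihu ihv =>
    rcases le_total m k with hmk | hmk
    · obtain ⟨r, L, p', q', p, q, rfl, hc, e⟩ := ihu
      obtain ⟨A, p₂, q₂, hc', e'⟩ := hc.exists_snoc hp e hv hmk
      exact ⟨r, _, _, _, _, _, by simp; omega, hc', e'⟩
    · obtain ⟨r, L, p', q', p, q, rfl, hc, e⟩ := ihv
      obtain ⟨A, p₂, q₂, hc', e'⟩ := hc.exists_snoc hp.symm e hu hmk
      exact ⟨r, _, _, _, _, _, by simp; omega, hc', e'⟩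

/-! ### Existence of the depth -/

lemma exists_isFareyParents (x : ℚ) (hx : x.den ≠ 1) :
    ∃ u v, IsFareyParents x u v ∧ u.den < x.den ∧ v.den < x.den := by
  have hq : (2 : ℤ) ≤ x.den := by have := x.den_pos; omega
  obtain ⟨s, t, hst⟩ := isCoprime_num_den x
  -- The denominator of one parent is the inverse of the numerator of `x` modulo the denominator.
  set b := s % (x.den : ℤ) with hb
  set a := -(t + s / x.den * x.num) with ha
  have hsb : s = b + x.den * (s / x.den) := (Int.emod_add_mul_ediv s x.den).symm
  have hdet : a * x.den - b * x.num = -1 := by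
    rw [ha]; linear_combination -hst + x.num * hsb
  have hb0 : 0 ≤ b := Int.emod_nonneg _ (by omega)
  have hbq : b < x.den := Int.emod_lt_of_pos _ (by omega)
  have hb1 : b ≠ 0 := by
    intro h0
    rw [h0] at hdet
    have : (x.den : ℤ) ∣ 1 := ⟨-a, by linear_combination hdet⟩
    have := Int.le_of_dvd one_pos this
    omega
  have hden (e f : ℤ) (hf : 0 < f) (hfq : f < x.den) : ((e : ℚ) / f).den < x.den := by
    have h1 : ((((e : ℚ) / f).den : ℕ) : ℤ) ∣ f := by
      simpa [Rat.divInt_eq_div] using Rat.den_dvd e f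
    have := Int.le_of_dvd hf h1
    omega
  exact ⟨(a : ℚ) / b, ((x.num - a : ℤ) : ℚ) / ((x.den - b : ℤ) : ℚ),
    ⟨a, b, x.num - a, x.den - b, by omega, by omega, by ring, by ring,
      .inr (by linear_combination hdet), rfl, rfl⟩,
    hden _ _ (by omega) hbq, hden _ _ (by omega) (by omega)⟩

lemma exists_depthRel (x : ℚ) : ∃ m, DepthRel x m := by
  induction hn : x.den using Nat.strong_induction_on generalizing x with
  | _ n ih =>
    by_cases hx : x.den = 1
    · exact ⟨0, .int x hx⟩
    · obtain ⟨u, v, hp, hu, hv⟩ := exists_isFareyParents x hx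
      obtain ⟨m, hm⟩ := ih _ (hn ▸ hu) u rfl
      obtain ⟨k, hk⟩ := ih _ (hn ▸ hv) v rfl
      exact ⟨_, .step x u v m k hx hp hm hk⟩

/-- For a non-integral rational `x`, the depth `d(x)` is the least `n ≥ 1` such that
`x = r + [a₁, …, aₙ]` for some integer `r` and integers `aᵢ` with `|aᵢ| ≥ 2`;
in particular such an expansion exists, and one of length exactly `d(x)` exists. -/
theorem stmt4 (x : ℚ) (hx : x.den ≠ 1) :
    IsLeast {n : ℕ | ∃ (r : ℤ) (L : List ℤ), L.length = n ∧ L ≠ [] ∧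
      (∀ a ∈ L, 2 ≤ |a|) ∧ x = (r : ℚ) + cfVal L} (fareyDepth x) := by
  have hd : DepthRel x (fareyDepth x) := Nat.sInf_mem (exists_depthRel x)
  constructor
  · obtain ⟨r, L, p', q', p, q, hL, hc, e⟩ := hd.exists_conv
    refine ⟨r, L, hL, ?_, hc.two_le, e.trans hc.add_cfVal.symm⟩
    rintro rfl
    exact hx (by rw [e, ← hc.add_cfVal]; simp [cfVal])
  · rintro n ⟨r, L, rfl, -, hL, e⟩
    obtain ⟨p', q', p, q, hc⟩ := Conv.exists_of_list r L hL
    exact hc.depth_le (by rwa [← hc.add_cfVal, ← e])
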